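/- arXiv:1707.00052 — 3 statements merged into one kernel-verified Lean document; each statement's English description precedes it below -/
import Mathlib

section
/- For all integers q ≥ 2, ℓ ≥ 1, t ≥ 1 and n ≥ ℓ, a code C ⊆ Z_q^n is t-tandem-duplication correcting (for duplications of length ℓ) if and only if it is t-tandem-deletion correcting (for deletions of length ℓ). -/
/-!
Tandem duplications of length `ℓ` commute up to a shift of positions, and so do tandem deletions,
except that deletions at squares `v v` and `v' v'` whose positions differ by at most `ℓ` already
give the same word. Thus both relations are subcommutative: two words obtained from the same word by
one operation each become equal after at most one further operation on each side. As the sphere of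
radius `t` consists of the words reached by `t` steps of the reflexive closure, these diamonds tile:
words `c₁` and `c₂` in the sphere of a common word `z` themselves have intersecting spheres. Since
`z` lies in the duplication sphere of `c` exactly when `c` lies in the deletion sphere of `z`,
intersecting duplication spheres give intersecting deletion spheres, and conversely.
-/

namespace DupPaper

variable {α : Type*}

/-- `y` is obtained from `x` by one tandem duplication of length `ℓ`. -/
def TDup (ℓ : ℕ) (x y : List α) : Prop :=
  ∃ u v w : List α, v.length = ℓ ∧ x = u ++ v ++ w ∧ y = u ++ v ++ v ++ w

/-- `y` is obtained from `x` by one tandem deletion of length `ℓ`. -/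
def TDel (ℓ : ℕ) (x y : List α) : Prop :=
  ∃ u v w : List α, v.length = ℓ ∧ x = u ++ v ++ v ++ w ∧ y = u ++ v ++ w

/-- `y` is obtained from `x` by one palindromic duplication of length `ℓ`. -/
def PDup (ℓ : ℕ) (x y : List α) : Prop :=
  ∃ u v w : List α, v.length = ℓ ∧ x = u ++ v ++ w ∧ y = u ++ v ++ v.reverse ++ w

/-- `y` is obtained from `x` by one palindromic deletion of length `ℓ`. -/
def PDel (ℓ : ℕ) (x y : List α) : Prop :=
  ∃ u v w : List α, v.length = ℓ ∧ x = u ++ v ++ v.reverse ++ w ∧ y = u ++ v ++ w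

/-- `y` is reached from `x` by exactly `k` steps of the relation `rel`. -/
def reachK (rel : List α → List α → Prop) : ℕ → List α → List α → Prop
  | 0, x, y => x = y
  | k + 1, x, y => ∃ z, rel x z ∧ reachK rel k z y

/-- The sphere of all words reachable from `x` by at most `t` operations of type `rel`
(in particular it contains `x` itself). -/
def sphere (rel : List α → List α → Prop) (t : ℕ) (x : List α) : Set (List α) :=
  {y | ∃ k ≤ t, reachK rel k x y}

/-- A code `C` is `t`-error correcting for the error type `rel` if distinct codewords have
disjoint spheres. -/
def Correcting (rel : List α → List α → Prop) (t : ℕ) (C : Set (List α)) : Prop :=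
  ∀ c₁ ∈ C, ∀ c₂ ∈ C, (sphere rel t c₁ ∩ sphere rel t c₂).Nonempty → c₁ = c₂

/-- The list of maximal runs (maximal blocks of identical consecutive symbols) of a word. -/
def runs [DecidableEq α] : List α → List (List α)
  | [] => []
  | a :: rest =>
    match runs rest with
    | [] => [[a]]
    | r :: rs => if r.head? = some a then (a :: r) :: rs else [a] :: r :: rs

/-- `r(x)`: the number of runs of `x`. -/
def numRuns [DecidableEq α] (x : List α) : ℕ := (runs x).length

/-- `r_i(x)`: the number of runs of `x` of length exactly `i`. -/
def numRunsEq [DecidableEq α] (x : List α) (i : ℕ) : ℕ :=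
  ((runs x).filter (fun r => r.length = i)).length

/-- `r_{≥ i}(x)`: the number of runs of `x` of length at least `i`. -/
def numRunsGe [DecidableEq α] (x : List α) (i : ℕ) : ℕ :=
  ((runs x).filter (fun r => i ≤ r.length)).length

/-- `r_{I,2}(x)`: the number of runs of length exactly `2` located in the interior of `x`,
i.e. runs that are neither the first nor the last run of `x`. -/
def numInteriorRuns2 [DecidableEq α] (x : List α) : ℕ :=
  ((((runs x).drop 1).dropLast).filter (fun r => r.length = 2)).length

/-- The second component `v` of the `ℓ`-step derivative `φ_ℓ(x) = (u, v)`: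
`v = (x_{ℓ+1}, …, x_n) − (x_1, …, x_{n−ℓ})` componentwise in `Z_q`. -/
def derivV (q ℓ : ℕ) (x : List (ZMod q)) : List (ZMod q) :=
  List.zipWith (· - ·) (x.drop ℓ) x

/-- Hamming weight: the number of nonzero entries. -/
def wtH {q : ℕ} (v : List (ZMod q)) : ℕ := (v.filter (fun a => a ≠ 0)).length

/-- The lengths `(m_0, m_1, …, m_p)` of the (possibly empty) maximal zero runs of `v`,
where `v = (0^{m_0}, w_1, 0^{m_1}, w_2, …, w_p, 0^{m_p})` with all `w_i ≠ 0`. -/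
def zeroRunLengths {q : ℕ} : List (ZMod q) → List ℕ
  | [] => [0]
  | a :: rest =>
    let t := zeroRunLengths rest
    if a = 0 then
      match t with
      | [] => [1]
      | m :: ms => (m + 1) :: ms
    else 0 :: t

/-- The `ℓ`-zero signature `σ_ℓ(v) = (⌊m_0/ℓ⌋, …, ⌊m_p/ℓ⌋)` of `v = derivV q ℓ x`. -/
def sig (q ℓ : ℕ) (x : List (ZMod q)) : List ℕ :=
  (zeroRunLengths (derivV q ℓ x)).map (· / ℓ)

/-- The trunk `μ_ℓ(v)`: every maximal zero run of length `m` is shortened to length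
`m mod ℓ`. -/
def trunk (q ℓ : ℕ) (v : List (ZMod q)) : List (ZMod q) :=
  ((runs v).map (fun r =>
    if r.head? = some (0 : ZMod q) then List.replicate (r.length % ℓ) (0 : ZMod q) else r)).flatten

/-- The root `ρ_ℓ(x) = (u, μ_ℓ(v))` where `φ_ℓ(x) = (u, v)` is the `ℓ`-step derivative. -/
def root (q ℓ : ℕ) (x : List (ZMod q)) : List (ZMod q) × List (ZMod q) :=
  (x.take ℓ, trunk q ℓ (derivV q ℓ x))

/-- `ℓ1`-distance of two lists of naturals. -/
def l1diff (a b : List ℕ) : ℕ := (List.zipWith (fun s t => max s t - min s t) a b).sum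

/-- The tandem duplication distance `d_{τ,ℓ}`. -/
def tdDist (q ℓ : ℕ) (x₁ x₂ : List (ZMod q)) : ℕ∞ :=
  if root q ℓ x₁ = root q ℓ x₂ then (l1diff (sig q ℓ x₁) (sig q ℓ x₂) : ℕ∞) else ⊤

/-- The palindromic duplication `π_{i,ℓ}(x) = (u v v^R w)` at position `i`,
where `x = (u v w)`, `|u| = i`, `|v| = ℓ`. -/
def pdupAt (i ℓ : ℕ) (x : List α) : List α :=
  x.take (i + ℓ) ++ ((x.drop i).take ℓ).reverse ++ x.drop (i + ℓ)

/-- The result `(u v w)` of the palindromic deletion `π^δ_{i,ℓ}` applied to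
`x = (u v v^R w)` with `|u| = i`, `|v| = ℓ`. -/
def pdelAt (i ℓ : ℕ) (x : List α) : List α :=
  x.take (i + ℓ) ++ x.drop (i + 2 * ℓ)

/-- The palindromic deletion `π^δ_{i,ℓ}` is defined at position `i` of `x`, i.e. `x` has the
form `(u v v^R w)` with `|u| = i` and `|v| = ℓ`. -/
def PDelDefinedAt (q ℓ i : ℕ) (x : List (ZMod q)) : Prop :=
  ∃ u v w : List (ZMod q), u.length = i ∧ v.length = ℓ ∧ x = u ++ v ++ v.reverse ++ w

/-- `A(n', ℓ', ω)`: the number of words in `Z_q^{n'}` whose maximal zero runs all have length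
at most `ℓ'` and whose Hamming weight is `ω`. -/
noncomputable def Acount (q n' ℓ' ω : ℕ) : ℕ :=
  {x : Fin n' → ZMod q | wtH (List.ofFn x) = ω ∧
    ∀ r ∈ runs (List.ofFn x), r.head? = some (0 : ZMod q) → r.length ≤ ℓ'}.ncard

/-- Integer binomial coefficient with the conventions `C(a,b) = 0` for `a ≥ 0 > b` or
`0 ≤ a < b`, `C(-1,-1) = 1`, and `C(a,-1) = 0` for `a ≥ 0`. -/
def ichoose (a b : ℤ) : ℕ :=
  if a = -1 ∧ b = -1 then 1
  else if 0 ≤ a ∧ 0 ≤ b then Nat.choose a.toNat b.toNat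
  else 0

/-- `r^{(0)}(A^π_ℓ(x))`: the number of maximal blocks of consecutive all-zero columns of the
matrix `A^π_ℓ(x) ∈ Z_q^{ℓ × (n−2ℓ+1)}` whose entry in row `s` and column `c`
(`1 ≤ s ≤ ℓ`, `1 ≤ c ≤ n−2ℓ+1`) is `x_{2ℓ+c−s} − x_{c+s−1}`. -/
def zeroColBlocks (q ℓ n : ℕ) (x : List (ZMod q)) : ℕ :=
  ((runs ((List.range (n - 2 * ℓ + 1)).map (fun c =>
      (List.range ℓ).all (fun s =>
        x.getD (2 * ℓ + c - s - 1) (0 : ZMod q) = x.getD (c + s) (0 : ZMod q))))).filter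
    (fun r => r.head? = some true)).length

section Sphere

open Relation

variable {β : Type*} {r : β → β → Prop}

/-- Subcommutativity of a relation, in the sense of abstract rewriting: the diamond property of its
reflexive closure, so that two successors of a point may also coincide or be joined by a single
step. -/
def Subcommutative (r : β → β → Prop) : Prop :=
  ∀ ⦃a b c⦄, r a b → r a c → Join (ReflGen r) b c

lemma Subcommutative.join_of_reflGen (hr : Subcommutative r) {a b c : β}
    (hb : ReflGen r a b) (hc : ReflGen r a c) : Join (ReflGen r) b c := by
  cases hb with
  | refl => exact ⟨c, hc, .refl⟩
  | single hb =>
    cases hc with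
    | refl => exact ⟨b, .refl, .single hb⟩
    | single hc => exact hr hb hc

lemma reflGen_swap {a b : β} : ReflGen (Function.swap r) a b ↔ ReflGen r b a := by
  simp only [reflGen_iff, Function.swap, eq_comm]

variable {rel : List α → List α → Prop} {s t : ℕ} {x y z : List α} {C : Set (List α)}

@[simp]
lemma mem_sphere_zero : y ∈ sphere rel 0 x ↔ x = y := by
  simp [sphere, reachK, eq_comm]

lemma mem_sphere_succ :
    y ∈ sphere rel (t + 1) x ↔ ∃ z, ReflGen rel x z ∧ y ∈ sphere rel t z := by
  constructor
  · rintro ⟨_ | k, hk, h⟩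
    · exact ⟨x, .refl, 0, t.zero_le, h⟩
    · obtain ⟨z, hxz, hzy⟩ := h
      exact ⟨z, .single hxz, k, Nat.le_of_succ_le_succ hk, hzy⟩
  · rintro ⟨z, hxz, k, hk, hzy⟩
    cases hxz with
    | refl => exact ⟨k, Nat.le_succ_of_le hk, hzy⟩
    | single hxz => exact ⟨k + 1, Nat.succ_le_succ hk, z, hxz, hzy⟩

lemma mem_sphere_succ' :
    y ∈ sphere rel (t + 1) x ↔ ∃ z ∈ sphere rel t x, ReflGen rel z y := by
  induction t generalizing x with
  | zero => simp [mem_sphere_succ]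
  | succ t ih =>
    calc y ∈ sphere rel (t + 2) x
      _ ↔ ∃ a, ReflGen rel x a ∧ ∃ z ∈ sphere rel t a, ReflGen rel z y := by
        simp only [mem_sphere_succ (t := t + 1), ih]
      _ ↔ ∃ z ∈ sphere rel (t + 1) x, ReflGen rel z y := by
        simp only [mem_sphere_succ]
        grind

lemma mem_sphere_swap : x ∈ sphere (Function.swap rel) t y ↔ y ∈ sphere rel t x := by
  induction t generalizing y with
  | zero => simp [eq_comm]
  | succ t ih =>
    rw [mem_sphere_succ, mem_sphere_succ']
    simp only [reflGen_swap, ih, and_comm (a := ReflGen rel _ y)]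

namespace Subcommutative

lemma exists_mem_sphere_reflGen (hr : Subcommutative rel) (hx : ReflGen rel z x)
    (hy : y ∈ sphere rel t z) : ∃ w ∈ sphere rel t x, ReflGen rel y w := by
  induction t generalizing z x with
  | zero =>
    obtain rfl := mem_sphere_zero.1 hy
    exact ⟨x, mem_sphere_zero.2 rfl, hx⟩
  | succ t ih =>
    obtain ⟨a, hza, hay⟩ := mem_sphere_succ.1 hy
    obtain ⟨b, hxb, hab⟩ := hr.join_of_reflGen hx hza
    obtain ⟨w, hbw, hyw⟩ := ih hab hay
    exact ⟨w, mem_sphere_succ.2 ⟨b, hxb, hbw⟩, hyw⟩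

lemma sphere_inter_sphere_nonempty (hr : Subcommutative rel) (hx : x ∈ sphere rel s z)
    (hy : y ∈ sphere rel t z) : (sphere rel t x ∩ sphere rel s y).Nonempty := by
  induction s generalizing z y with
  | zero =>
    obtain rfl := mem_sphere_zero.1 hx
    exact ⟨y, hy, mem_sphere_zero.2 rfl⟩
  | succ s ih =>
    obtain ⟨a, hza, hax⟩ := mem_sphere_succ.1 hx
    obtain ⟨b, hab, hyb⟩ := hr.exists_mem_sphere_reflGen hza hy
    obtain ⟨w, hxw, hbw⟩ := ih hax hab
    exact ⟨w, hxw, mem_sphere_succ.2 ⟨b, hyb, hbw⟩⟩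

lemma correcting_swap (hr : Subcommutative rel) (hC : Correcting rel t C) :
    Correcting (Function.swap rel) t C := by
  rintro c₁ h₁ c₂ h₂ ⟨z, hz₁, hz₂⟩
  exact hC c₁ h₁ c₂ h₂ <|
    hr.sphere_inter_sphere_nonempty (mem_sphere_swap.1 hz₁) (mem_sphere_swap.1 hz₂)

end Subcommutative

end Sphere

section Tandem

open Relation

variable {ℓ : ℕ} {u v w d v' w' : List α}

lemma exists_eq_append_of_append_eq_append {a b c e : List α} (h : a ++ b = c ++ e)
    (hl : a.length ≤ c.length) : ∃ r, c = a ++ r ∧ b = r ++ e := by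
  obtain ⟨r, rfl⟩ : a <+: c :=
    List.prefix_of_prefix_length_le (List.prefix_append a b) (h ▸ List.prefix_append c e) hl
  exact ⟨r, rfl, by simpa using h⟩

lemma swap_tDup : Function.swap (TDup (α := α) ℓ) = TDel ℓ := by
  ext x y
  simp only [Function.swap, TDup, TDel, and_comm (a := y = _)]

lemma join_tDup_of_append_eq (hv : v.length = ℓ) (hv' : v'.length = ℓ)
    (h : v ++ w = d ++ v' ++ w') :
    Join (TDup ℓ) (u ++ v ++ v ++ w) (u ++ d ++ v' ++ v' ++ w') := by
  obtain ⟨r, hr, rfl⟩ := exists_eq_append_of_append_eq_append h (by simp [hv, hv'])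
  refine ⟨u ++ v ++ d ++ v' ++ v' ++ w', ⟨u ++ v ++ d, v', w', hv', ?_, rfl⟩,
    u, v, r ++ v' ++ w', hv, ?_, ?_⟩ <;> grind

lemma square_deletion_eq_of_shift_le (hv : v.length = v'.length) (hd : d.length ≤ v.length)
    (h : v ++ v ++ w = d ++ v' ++ v' ++ w') : v ++ w = d ++ v' ++ w' := by
  -- The squares overlap in at least half their length, so `v = d e` and `v' = e d` are conjugate.
  obtain ⟨e, rfl, he⟩ : ∃ e, v = d ++ e ∧ v' ++ v' ++ w' = e ++ (v ++ w) :=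
    exists_eq_append_of_append_eq_append (by simpa using h.symm) hd
  have hsq : v' ++ (v' ++ w') = (e ++ d) ++ (e ++ w) := by simpa using he
  obtain ⟨rfl, hw⟩ := List.append_inj hsq (by grind)
  simp [hw]

lemma join_tDel_of_le_shift (hv : v.length = ℓ) (hv' : v'.length = ℓ) (hd : ℓ ≤ d.length)
    (h : v ++ v ++ w = d ++ v' ++ v' ++ w') :
    Join (TDel ℓ) (u ++ v ++ w) (u ++ d ++ v' ++ w') := by
  obtain ⟨e, rfl, he⟩ : ∃ e, d = v ++ e ∧ v ++ w = e ++ v' ++ (v' ++ w') := by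
    simpa using exists_eq_append_of_append_eq_append (by simpa using h) (hv.trans_le hd)
  -- The second copy of `v` may run into `v' v'`, but not past its first half, so the square
  -- `v v` survives the deletion of the other half.
  obtain ⟨r, hr, rfl⟩ := exists_eq_append_of_append_eq_append he (by simp [hv, hv'])
  refine ⟨u ++ e ++ v' ++ w', ⟨u ++ e, v', w', hv', ?_, rfl⟩, u, v, r ++ w', hv, ?_, ?_⟩ <;> grind

lemma subcommutative_tDup : Subcommutative (TDup (α := α) ℓ) := by
  rintro _ _ _ ⟨u, v, w, hv, rfl, rfl⟩ ⟨u', v', w', hv', h, rfl⟩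
  wlog hu : u.length ≤ u'.length generalizing u v w u' v' w'
  · exact symm (this u' v' w' hv' u v w hv h.symm (Nat.le_of_not_ge hu))
  obtain ⟨d, rfl, hd⟩ := exists_eq_append_of_append_eq_append (by simpa using h) hu
  obtain ⟨z, hz, hz'⟩ := join_tDup_of_append_eq (u := u) hv hv' (by simpa using hd)
  exact ⟨z, .single hz, .single hz'⟩

lemma subcommutative_tDel : Subcommutative (TDel (α := α) ℓ) := by
  rintro _ _ _ ⟨u, v, w, hv, rfl, rfl⟩ ⟨u', v', w', hv', h, rfl⟩
  wlog hu : u.length ≤ u'.length generalizing u v w u' v' w'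
  · exact symm (this u' v' w' hv' u v w hv h.symm (Nat.le_of_not_ge hu))
  obtain ⟨d, rfl, hd⟩ : ∃ d, u' = u ++ d ∧ v ++ v ++ w = d ++ v' ++ v' ++ w' := by
    simpa using exists_eq_append_of_append_eq_append (by simpa using h) hu
  rcases le_total d.length ℓ with hle | hge
  · have heq : u ++ v ++ w = u ++ d ++ v' ++ w' := by
      simpa using square_deletion_eq_of_shift_le (hv.trans hv'.symm) (hle.trans_eq hv.symm) hd
    exact heq ▸ ⟨_, .refl, .refl⟩
  · obtain ⟨z, hz, hz'⟩ := join_tDel_of_le_shift (u := u) hv hv' hge hd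
    exact ⟨z, .single hz, .single hz'⟩

end Tandem

theorem stmt0_general (ℓ t : ℕ) (C : Set (List α)) :
    Correcting (TDup ℓ) t C ↔ Correcting (TDel ℓ) t C := by
  have hdel : Subcommutative (Function.swap (TDup (α := α) ℓ)) := swap_tDup ▸ subcommutative_tDel
  rw [← swap_tDup]
  exact ⟨subcommutative_tDup.correcting_swap, hdel.correcting_swap⟩

/-- A code `C ⊆ Z_q^n` is `t`-tandem-duplication correcting (length `ℓ`) iff it is
`t`-tandem-deletion correcting (length `ℓ`). -/
theorem stmt0 (q ℓ t n : ℕ) (hq : 2 ≤ q) (hℓ : 1 ≤ ℓ) (ht : 1 ≤ t) (hn : ℓ ≤ n)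
    (C : Set (List (ZMod q))) (hC : ∀ c ∈ C, c.length = n) :
    Correcting (TDup ℓ) t C ↔ Correcting (TDel ℓ) t C :=
  stmt0_general ℓ t C
end DupPaper
end

section
/- For all integers q ≥ 2, ℓ ≥ 1, t ≥ 1 and n ≥ ℓ, a code C ⊆ Z_q^n is t-tandem-duplication correcting (for duplications of length ℓ) if and only if d_{τ,ℓ}(c₁, c₂) ≥ 2t+1 for all distinct c₁, c₂ ∈ C. -/
/-!
On the derivative `φ_ℓ(x) = (u, v)`, a tandem duplication of length `ℓ` inserts `ℓ` consecutive
zeros into `v` and leaves `u` alone; every insertion arises in this way, and `φ_ℓ` is injective.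
Such an insertion lengthens one zero run by `ℓ`: it fixes the trunk and raises a single entry of the
signature by one. Hence two words with a common descendant have the same root, and by the triangle
inequality their distance is at most the total number of duplications used. Conversely, two words
with the same root can both be raised to the entrywise maximum of their signatures, at a total
cost equal to their distance. If the two words have the same length, both sides use the same number
of duplications, so their `t`-spheres meet exactly when their distance is at most `2 * t`.
-/

namespace DupPaper

variable {α : Type*}

/-! ### Iterated steps and the distance of signatures -/

section Reach

variable {β : Type*} {rel : List α → List α → Prop} {j k ℓ : ℕ} {x y z : List α}

lemma reachK.trans (hxy : reachK rel j x y) (hyz : reachK rel k y z) :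
    reachK rel (j + k) x z := by
  induction j generalizing x with
  | zero => cases hxy; simpa only [Nat.zero_add] using hyz
  | succ j ih =>
    obtain ⟨x', hx, hx'⟩ := hxy
    rw [Nat.add_right_comm]
    exact ⟨x', hx, ih hx'⟩

lemma reachK.map {rel' : List β → List β → Prop} (f : List α → List β)
    (hf : ∀ x y, rel x y → rel' (f x) (f y)) (h : reachK rel k x y) :
    reachK rel' k (f x) (f y) := by
  induction k generalizing x with
  | zero => exact congrArg f h
  | succ k ih =>
    obtain ⟨z, hxz, hzy⟩ := h
    exact ⟨f z, hf x z hxz, ih hzy⟩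

lemma reachK.eq_of_invariant (f : List α → β) (hf : ∀ x y, rel x y → f x = f y)
    (h : reachK rel k x y) : f x = f y := by
  induction k generalizing x with
  | zero => exact congrArg f h
  | succ k ih =>
    obtain ⟨z, hxz, hzy⟩ := h
    exact (hf x z hxz).trans (ih hzy)

lemma reachK.length_eq (hrel : ∀ x y, rel x y → y.length = x.length + ℓ)
    (h : reachK rel k x y) : y.length = x.length + k * ℓ := by
  induction k generalizing x with
  | zero => cases h; simp
  | succ k ih =>
    obtain ⟨z, hxz, hzy⟩ := h
    rw [ih hzy, hrel x z hxz]
    ring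

end Reach

lemma l1diff_cons_cons (s t : ℕ) (a b : List ℕ) :
    l1diff (s :: a) (t :: b) = (max s t - min s t) + l1diff a b := by
  simp [l1diff]

lemma l1diff_self (a : List ℕ) : l1diff a a = 0 := by
  simp [l1diff]

lemma l1diff_comm (a b : List ℕ) : l1diff a b = l1diff b a := by
  simp only [l1diff, List.zipWith_comm (as := a), max_comm, min_comm]

/-- `l1diff` truncates to the shorter list, so the triangle inequality fails when the middle list
is too short. -/
lemma l1diff_triangle {a b : List ℕ} (c : List ℕ) (h : a.length = b.length) :
    l1diff a c ≤ l1diff a b + l1diff b c := by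
  induction a generalizing b c with
  | nil => simp [l1diff]
  | cons s a ih =>
    obtain _ | ⟨t, b⟩ := b
    · simp at h
    obtain _ | ⟨r, c⟩ := c
    · simp [l1diff]
    have htail := ih c (by simpa using h)
    simp only [l1diff_cons_cons]
    omega

/-! ### Inserting zeros into a word -/

/-- `w` is obtained from `v` by inserting `ℓ` consecutive zeros at an arbitrary position: the
effect of a tandem duplication of length `ℓ` on the second component of the `ℓ`-step derivative. -/
def InsertZeros [Zero α] (ℓ : ℕ) (v w : List α) : Prop :=
  ∃ a b, v = a ++ b ∧ w = a ++ List.replicate ℓ 0 ++ b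

section InsertZeros

variable [Zero α] {ℓ k : ℕ} {v w : List α}

lemma InsertZeros.append_left (c : List α) (h : InsertZeros ℓ v w) :
    InsertZeros ℓ (c ++ v) (c ++ w) := by
  obtain ⟨a, b, rfl, rfl⟩ := h
  exact ⟨c ++ a, b, by simp, by simp⟩

lemma reachK_insertZeros_replicate_append (ℓ m k : ℕ) (v : List α) :
    reachK (InsertZeros ℓ) k (List.replicate m 0 ++ v) (List.replicate (m + k * ℓ) 0 ++ v) := by
  induction k generalizing m with
  | zero => simp [reachK]
  | succ k ih =>
    refine ⟨List.replicate (m + ℓ) 0 ++ v, ⟨List.replicate m 0, v, rfl, ?_⟩, ?_⟩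
    · rw [List.replicate_append_replicate]
    · simpa only [show m + ℓ + k * ℓ = m + (k + 1) * ℓ by ring] using ih (m + ℓ)

lemma reachK_insertZeros_replicate_append_cons (h : reachK (InsertZeros ℓ) k v w)
    (m j : ℕ) (a : α) :
    reachK (InsertZeros ℓ) (j + k) (List.replicate m 0 ++ a :: v)
      (List.replicate (m + j * ℓ) 0 ++ a :: w) := by
  refine (reachK_insertZeros_replicate_append ℓ m j (a :: v)).trans ?_
  have hmap := h.map _ fun _ _ =>
    InsertZeros.append_left (List.replicate (m + j * ℓ) 0 ++ [a])
  simpa only [List.append_assoc, List.singleton_append] using hmap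

@[elab_as_elim]
lemma zeroRun_induction {P : List α → Prop} (zeros : ∀ m, P (List.replicate m 0))
    (zeros_cons : ∀ m a v, a ≠ 0 → P v → P (List.replicate m 0 ++ a :: v)) (v : List α) :
    P v := by
  -- Strengthened so that leading zeros can be absorbed into the first zero run.
  suffices h : ∀ m, P (List.replicate m 0 ++ v) by simpa using h 0
  induction v with
  | nil => simpa using zeros
  | cons a v ih =>
    intro m
    by_cases ha : a = 0
    · subst ha
      simpa [List.replicate_succ'] using ih (m + 1)
    · exact zeros_cons m a v ha (by simpa using ih 0)

@[elab_as_elim]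
lemma InsertZeros.induction_on_zeroRun {P : List α → List α → Prop} (h : InsertZeros ℓ v w)
    (only : ∀ m, P (List.replicate m 0) (List.replicate (m + ℓ) 0))
    (first : ∀ m a v, a ≠ 0 →
      P (List.replicate m 0 ++ a :: v) (List.replicate (m + ℓ) 0 ++ a :: v))
    (later : ∀ m a v w, a ≠ 0 → P v w →
      P (List.replicate m 0 ++ a :: v) (List.replicate m 0 ++ a :: w)) :
    P v w := by
  obtain ⟨a, b, rfl, rfl⟩ := h
  induction a using zeroRun_induction with
  | zeros m =>
    induction b using zeroRun_induction with
    | zeros m' =>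
      simpa only [List.replicate_append_replicate, Nat.add_right_comm] using only (m + m')
    | zeros_cons m' c b hc _ =>
      simpa only [← List.append_assoc, List.replicate_append_replicate, Nat.add_right_comm]
        using first (m + m') c b hc
  | zeros_cons m c a hc ih =>
    simpa only [List.append_assoc, List.cons_append] using later m c _ _ hc ih

end InsertZeros

lemma replicate_ne_replicate_append_cons {z a : α} (ha : a ≠ z) (j k : ℕ) (v : List α) :
    List.replicate j z ≠ List.replicate k z ++ a :: v := by
  intro h
  have hmem : a ∈ List.replicate j z := by simp [h]
  exact ha (List.eq_of_mem_replicate hmem)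

lemma replicate_append_cons_inj {z a b : α} (ha : a ≠ z) (hb : b ≠ z) {j k : ℕ} {v w : List α} :
    List.replicate j z ++ a :: v = List.replicate k z ++ b :: w ↔ j = k ∧ a = b ∧ v = w := by
  induction j generalizing k with
  | zero => cases k <;> simp [List.replicate_succ, ha]
  | succ j ih => cases k <;> simp [List.replicate_succ, hb.symm, ih]

/-! ### Trunk and zero signature -/

section Runs

variable [DecidableEq α]

lemma exists_runs_cons_eq (a : α) (v : List α) : ∃ r rs, runs (a :: v) = (a :: r) :: rs := by
  rw [runs]
  rcases runs v with _ | ⟨r, rs⟩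
  · exact ⟨[], [], rfl⟩
  · dsimp only
    split_ifs
    · exact ⟨r, rs, rfl⟩
    · exact ⟨[], r :: rs, rfl⟩

lemma runs_replicate_succ (a : α) (m : ℕ) :
    runs (List.replicate (m + 1) a) = [List.replicate (m + 1) a] := by
  induction m with
  | zero => rfl
  | succ m ih =>
    rw [List.replicate_succ, runs, ih]
    simp [List.replicate_succ]

lemma runs_replicate_succ_append_cons {a b : α} (hb : b ≠ a) (m : ℕ) (v : List α) :
    runs (List.replicate (m + 1) a ++ b :: v) = List.replicate (m + 1) a :: runs (b :: v) := by
  induction m with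
  | zero =>
    obtain ⟨r, rs, h⟩ := exists_runs_cons_eq b v
    simp [runs.eq_2 a, h, hb]
  | succ m ih =>
    rw [List.replicate_succ, List.cons_append, runs, ih]
    simp [List.replicate_succ]

end Runs

/-- The `ℓ`-zero signature `σ_ℓ(v)` as a function of the derivative word `v`, whereas `sig` takes
the word whose derivative is `v`. -/
def zeroSig {q : ℕ} (ℓ : ℕ) (v : List (ZMod q)) : List ℕ := (zeroRunLengths v).map (· / ℓ)

section ZeroRuns

variable {q ℓ k : ℕ} {a : ZMod q} {v w : List (ZMod q)}

lemma trunk_cons (ha : a ≠ 0) (v : List (ZMod q)) : trunk q ℓ (a :: v) = a :: trunk q ℓ v := by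
  rw [trunk, trunk, runs]
  cases runs v with
  | nil => simp [ha]
  | cons r rs =>
    dsimp only
    split_ifs with hr
    · simp [ha, hr]
    · simp [ha]

lemma trunk_replicate (q ℓ m : ℕ) :
    trunk q ℓ (List.replicate m 0) = List.replicate (m % ℓ) 0 := by
  cases m with
  | zero => simp [trunk, runs]
  | succ m => simp [trunk, runs_replicate_succ, List.head?_replicate]

lemma trunk_replicate_append_cons (ha : a ≠ 0) (m : ℕ) (v : List (ZMod q)) :
    trunk q ℓ (List.replicate m 0 ++ a :: v) =
      List.replicate (m % ℓ) 0 ++ a :: trunk q ℓ v := by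
  rw [← trunk_cons ha]
  cases m with
  | zero => simp
  | succ m => simp [trunk, runs_replicate_succ_append_cons ha, List.head?_replicate]

lemma zeroSig_replicate (q ℓ m : ℕ) : zeroSig ℓ (List.replicate m (0 : ZMod q)) = [m / ℓ] := by
  suffices h : zeroRunLengths (List.replicate m (0 : ZMod q)) = [m] by simp [zeroSig, h]
  induction m with
  | zero => rfl
  | succ m ih => simp [List.replicate_succ, zeroRunLengths, ih]

lemma zeroSig_replicate_append_cons (ha : a ≠ 0) (m : ℕ) (v : List (ZMod q)) :
    zeroSig ℓ (List.replicate m 0 ++ a :: v) = m / ℓ :: zeroSig ℓ v := by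
  suffices h : zeroRunLengths (List.replicate m 0 ++ a :: v) = m :: zeroRunLengths v by
    simp [zeroSig, h]
  induction m with
  | zero => simp [zeroRunLengths, ha]
  | succ m ih => simp [List.replicate_succ, zeroRunLengths, ih]

lemma InsertZeros.trunk_eq (h : InsertZeros ℓ v w) : trunk q ℓ v = trunk q ℓ w := by
  refine h.induction_on_zeroRun (fun m => ?_) (fun m a v ha => ?_) (fun m a v w ha ih => ?_)
  · simp only [trunk_replicate, Nat.add_mod_right]
  · simp only [trunk_replicate_append_cons ha, Nat.add_mod_right]
  · simp only [trunk_replicate_append_cons ha, ih]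

lemma InsertZeros.length_zeroSig_eq (h : InsertZeros ℓ v w) :
    (zeroSig ℓ v).length = (zeroSig ℓ w).length := by
  refine h.induction_on_zeroRun (fun m => ?_) (fun m a v ha => ?_) (fun m a v w ha ih => ?_)
  · simp only [zeroSig_replicate, List.length_singleton]
  · simp only [zeroSig_replicate_append_cons ha, List.length_cons]
  · simp only [zeroSig_replicate_append_cons ha, List.length_cons, ih]

lemma InsertZeros.l1diff_zeroSig (hℓ : 1 ≤ ℓ) (h : InsertZeros ℓ v w) :
    l1diff (zeroSig ℓ v) (zeroSig ℓ w) = 1 := by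
  refine h.induction_on_zeroRun (fun m => ?_) (fun m a v ha => ?_) (fun m a v w ha ih => ?_)
  · simp [zeroSig_replicate, Nat.add_div_right m hℓ, l1diff]
  · simp [zeroSig_replicate_append_cons ha, Nat.add_div_right m hℓ, l1diff_cons_cons, l1diff_self]
  · simp [zeroSig_replicate_append_cons ha, l1diff_cons_cons, ih]

lemma l1diff_zeroSig_le_of_reachK (hℓ : 1 ≤ ℓ) (h : reachK (InsertZeros ℓ) k v w) :
    l1diff (zeroSig ℓ v) (zeroSig ℓ w) ≤ k := by
  induction k generalizing v with
  | zero => cases h; exact (l1diff_self _).le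
  | succ k ih =>
    obtain ⟨z, hvz, hzw⟩ := h
    calc l1diff (zeroSig ℓ v) (zeroSig ℓ w)
        ≤ l1diff (zeroSig ℓ v) (zeroSig ℓ z) + l1diff (zeroSig ℓ z) (zeroSig ℓ w) :=
          l1diff_triangle _ hvz.length_zeroSig_eq
      _ ≤ 1 + k := Nat.add_le_add (hvz.l1diff_zeroSig hℓ).le (ih hzw)
      _ = k + 1 := Nat.add_comm 1 k

end ZeroRuns

/-! ### Common descendants -/

lemma exists_add_mul_eq_add_mul {ℓ m n : ℕ} (h : m % ℓ = n % ℓ) :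
    ∃ i j, m + i * ℓ = n + j * ℓ ∧ i + j = max (m / ℓ) (n / ℓ) - min (m / ℓ) (n / ℓ) := by
  -- Both sides are raised to the quotient `max (m / ℓ) (n / ℓ)`, with the common remainder.
  refine ⟨n / ℓ - m / ℓ, m / ℓ - n / ℓ, ?_, by omega⟩
  calc m + (n / ℓ - m / ℓ) * ℓ
      = m % ℓ + (m / ℓ + (n / ℓ - m / ℓ)) * ℓ := by
        nth_rw 1 [← Nat.mod_add_div m ℓ]; ring
    _ = n % ℓ + (n / ℓ + (m / ℓ - n / ℓ)) * ℓ := by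
        rw [h, show m / ℓ + (n / ℓ - m / ℓ) = n / ℓ + (m / ℓ - n / ℓ) by omega]
    _ = n + (m / ℓ - n / ℓ) * ℓ := by
        nth_rw 4 [← Nat.mod_add_div n ℓ]; ring

/-- The descendant `w` is the word whose signature is the entrywise maximum of those of `v₁` and
`v₂`. -/
lemma exists_reachK_insertZeros_of_trunk_eq {q ℓ : ℕ} {v₁ v₂ : List (ZMod q)}
    (h : trunk q ℓ v₁ = trunk q ℓ v₂) :
    ∃ w k₁ k₂, reachK (InsertZeros ℓ) k₁ v₁ w ∧ reachK (InsertZeros ℓ) k₂ v₂ w ∧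
      k₁ + k₂ = l1diff (zeroSig ℓ v₁) (zeroSig ℓ v₂) := by
  induction v₁ using zeroRun_induction generalizing v₂ with
  | zeros m =>
    cases v₂ using zeroRun_induction with
    | zeros m' =>
      have hmod : m % ℓ = m' % ℓ := by
        simpa only [trunk_replicate, List.length_replicate] using congrArg List.length h
      obtain ⟨j, j', hlen, hcost⟩ := exists_add_mul_eq_add_mul hmod
      refine ⟨List.replicate (m + j * ℓ) 0, j, j', ?_, ?_, ?_⟩
      · simpa using reachK_insertZeros_replicate_append ℓ m j ([] : List (ZMod q))
      · simpa [hlen] using reachK_insertZeros_replicate_append ℓ m' j' ([] : List (ZMod q))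
      · simpa [zeroSig_replicate, l1diff] using hcost
    | zeros_cons m' b v' hb _ =>
      rw [trunk_replicate, trunk_replicate_append_cons hb] at h
      exact absurd h (replicate_ne_replicate_append_cons hb _ _ _)
  | zeros_cons m a v ha ih =>
    cases v₂ using zeroRun_induction with
    | zeros m' =>
      rw [trunk_replicate, trunk_replicate_append_cons ha] at h
      exact absurd h.symm (replicate_ne_replicate_append_cons ha _ _ _)
    | zeros_cons m' b v' hb _ =>
      rw [trunk_replicate_append_cons ha, trunk_replicate_append_cons hb,
        replicate_append_cons_inj ha hb] at h
      obtain ⟨hmod, rfl, htail⟩ := h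
      obtain ⟨j, j', hlen, hcost⟩ := exists_add_mul_eq_add_mul hmod
      obtain ⟨w, k₁, k₂, hw₁, hw₂, hk⟩ := ih htail
      refine ⟨List.replicate (m + j * ℓ) 0 ++ a :: w, j + k₁, j' + k₂, ?_, ?_, ?_⟩
      · exact reachK_insertZeros_replicate_append_cons hw₁ m j a
      · simpa only [hlen] using reachK_insertZeros_replicate_append_cons hw₂ m' j' a
      · rw [zeroSig_replicate_append_cons ha, zeroSig_replicate_append_cons ha, l1diff_cons_cons]
        omega

/-! ### Tandem duplications and the derivative -/

lemma TDup.take_eq {ℓ : ℕ} {x y : List α} (h : TDup ℓ x y) : x.take ℓ = y.take ℓ := by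
  obtain ⟨u, v, w, hv, rfl, rfl⟩ := h
  have hle : ℓ ≤ (u ++ v).length := by simp [hv]
  rw [List.append_assoc (u ++ v) v w, List.take_append_of_le_length hle,
    List.take_append_of_le_length hle]

lemma TDup.length_eq {ℓ : ℕ} {x y : List α} (h : TDup ℓ x y) : y.length = x.length + ℓ := by
  obtain ⟨u, v, w, hv, rfl, rfl⟩ := h
  simp only [List.length_append, hv]
  omega

lemma zipWith_append_right_of_length_eq {β γ : Type*} (f : α → β → γ) {as : List α} {bs : List β}
    (h : as.length = bs.length) (cs : List β) :
    List.zipWith f as (bs ++ cs) = List.zipWith f as bs := by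
  simpa using List.zipWith_append (f := f) (l₁' := []) (l₂' := cs) h

section Derivative

variable {q ℓ k k₁ k₂ : ℕ} {v w x x₁ x₂ y : List (ZMod q)}

lemma length_derivV (q ℓ : ℕ) (x : List (ZMod q)) : (derivV q ℓ x).length = x.length - ℓ := by
  simp [derivV]

lemma derivV_append (hv : v.length = ℓ) (u w : List (ZMod q)) :
    derivV q ℓ (u ++ v ++ w) = derivV q ℓ (u ++ v) ++ derivV q ℓ (v ++ w) := by
  have hdrop : (u ++ v ++ w).drop ℓ = (u ++ v).drop ℓ ++ w :=
    List.drop_append_of_le_length (by simp [hv])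
  have hlen : ((u ++ v).drop ℓ).length = u.length := by simp [hv]
  have hright : (v ++ w).drop ℓ = w := by simp [← hv]
  simp only [derivV, hdrop, hright]
  rw [List.append_assoc u, List.zipWith_append hlen, zipWith_append_right_of_length_eq _ hlen]

lemma derivV_append_self (hv : v.length = ℓ) :
    derivV q ℓ (v ++ v) = List.replicate ℓ 0 := by
  have hdrop : (v ++ v).drop ℓ = v := by simp [← hv]
  rw [derivV, hdrop, zipWith_append_right_of_length_eq _ rfl]
  simp [List.zipWith_self, hv]

lemma derivV_tandem (hv : v.length = ℓ) (u w : List (ZMod q)) :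
    derivV q ℓ (u ++ v ++ v ++ w) =
      derivV q ℓ (u ++ v) ++ List.replicate ℓ 0 ++ derivV q ℓ (v ++ w) := by
  rw [List.append_assoc (u ++ v), derivV_append hv, ← List.append_assoc v v w,
    derivV_append hv, derivV_append_self hv, List.append_assoc]

lemma getElem_derivV (x : List (ZMod q)) (i : ℕ) (hi : ℓ + i < x.length) :
    (derivV q ℓ x)[i]'(by rw [length_derivV]; omega) = x[ℓ + i] - x[i] := by
  simp [derivV]

lemma eq_of_take_eq_of_derivV_eq (hℓ : 1 ≤ ℓ) (htake : x.take ℓ = y.take ℓ)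
    (hderiv : derivV q ℓ x = derivV q ℓ y) : x = y := by
  have hlen : x.length = y.length := by
    have htake_len := congrArg List.length htake
    have hderiv_len := congrArg List.length hderiv
    simp only [List.length_take] at htake_len
    simp only [length_derivV] at hderiv_len
    omega
  refine List.ext_getElem hlen fun i hx hy => ?_
  induction i using Nat.strong_induction_on with
  | _ i ih =>
    obtain hi | hi := lt_or_ge i ℓ
    · calc x[i] = (x.take ℓ)[i]'(by simp [hi, hx]) := by simp
        _ = (y.take ℓ)[i]'(by simp [hi, hy]) := by simp only [htake]
        _ = y[i] := by simp
    · obtain ⟨j, rfl⟩ := Nat.exists_eq_add_of_le hi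
      have hstep : x[ℓ + j] - x[j] = y[ℓ + j] - y[j] := by
        simp only [← getElem_derivV, hderiv]
      rwa [ih j (by omega) (by omega) (by omega), sub_left_inj] at hstep

lemma TDup.insertZeros_derivV (h : TDup ℓ x y) :
    InsertZeros ℓ (derivV q ℓ x) (derivV q ℓ y) := by
  obtain ⟨u, v, w, hv, rfl, rfl⟩ := h
  exact ⟨_, _, derivV_append hv u w, derivV_tandem hv u w⟩

lemma InsertZeros.exists_tDup (hx : ℓ ≤ x.length) (h : InsertZeros ℓ (derivV q ℓ x) w) :
    ∃ y, TDup ℓ x y ∧ derivV q ℓ y = w := by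
  obtain ⟨a, b, hab, rfl⟩ := h
  have hlen : a.length + b.length = x.length - ℓ := by
    rw [← List.length_append, ← hab, length_derivV]
  obtain ⟨u, v, z, rfl, hu, hv⟩ :
      ∃ u v z, x = u ++ v ++ z ∧ u.length = a.length ∧ v.length = ℓ := by
    refine ⟨x.take a.length, (x.drop a.length).take ℓ, (x.drop a.length).drop ℓ, ?_, ?_, ?_⟩
    · rw [List.append_assoc, List.take_append_drop, List.take_append_drop]
    · rw [List.length_take]; omega
    · rw [List.length_take, List.length_drop]; omega
  rw [derivV_append hv] at hab
  obtain ⟨rfl, rfl⟩ := List.append_inj hab (by simp [length_derivV, hv, hu])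
  exact ⟨u ++ v ++ v ++ z, ⟨u, v, z, hv, rfl, rfl⟩, derivV_tandem hv u z⟩

lemma exists_reachK_tDup_of_reachK_insertZeros (hx : ℓ ≤ x.length)
    (h : reachK (InsertZeros ℓ) k (derivV q ℓ x) w) :
    ∃ y, reachK (TDup ℓ) k x y ∧ derivV q ℓ y = w := by
  induction k generalizing x with
  | zero => exact ⟨x, rfl, h⟩
  | succ k ih =>
    obtain ⟨z, hz, hzw⟩ := h
    obtain ⟨x', hxx', rfl⟩ := hz.exists_tDup hx
    obtain ⟨y, hx'y, hy⟩ := ih (by rw [hxx'.length_eq]; omega) hzw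
    exact ⟨y, ⟨x', hxx', hx'y⟩, hy⟩

lemma root_eq_of_reachK (h : reachK (TDup ℓ) k x y) : root q ℓ x = root q ℓ y :=
  h.eq_of_invariant _ fun _ _ hxy => Prod.ext hxy.take_eq hxy.insertZeros_derivV.trunk_eq

/-! ### Distance and spheres -/

lemma tdDist_le_of_reachK (hℓ : 1 ≤ ℓ) (h₁ : reachK (TDup ℓ) k₁ x₁ y)
    (h₂ : reachK (TDup ℓ) k₂ x₂ y) : tdDist q ℓ x₁ x₂ ≤ (k₁ + k₂ : ℕ) := by
  have hderiv₁ := h₁.map (derivV q ℓ) fun _ _ => TDup.insertZeros_derivV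
  have hderiv₂ := h₂.map (derivV q ℓ) fun _ _ => TDup.insertZeros_derivV
  have hlen : (zeroSig ℓ (derivV q ℓ x₁)).length = (zeroSig ℓ (derivV q ℓ y)).length :=
    hderiv₁.eq_of_invariant (fun v => (zeroSig ℓ v).length) fun _ _ => InsertZeros.length_zeroSig_eq
  rw [tdDist, if_pos ((root_eq_of_reachK h₁).trans (root_eq_of_reachK h₂).symm), Nat.cast_le]
  calc l1diff (sig q ℓ x₁) (sig q ℓ x₂)
      ≤ l1diff (sig q ℓ x₁) (sig q ℓ y) + l1diff (sig q ℓ y) (sig q ℓ x₂) :=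
        l1diff_triangle _ hlen
    _ = l1diff (sig q ℓ x₁) (sig q ℓ y) + l1diff (sig q ℓ x₂) (sig q ℓ y) := by
        rw [l1diff_comm (sig q ℓ y)]
    _ ≤ k₁ + k₂ := Nat.add_le_add (l1diff_zeroSig_le_of_reachK hℓ hderiv₁)
        (l1diff_zeroSig_le_of_reachK hℓ hderiv₂)

lemma exists_reachK_of_tdDist_eq (hℓ : 1 ≤ ℓ) (hx₁ : ℓ ≤ x₁.length) (hx₂ : ℓ ≤ x₂.length)
    {d : ℕ} (h : tdDist q ℓ x₁ x₂ = d) :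
    ∃ y k₁ k₂, reachK (TDup ℓ) k₁ x₁ y ∧ reachK (TDup ℓ) k₂ x₂ y ∧ k₁ + k₂ = d := by
  obtain ⟨hroot, hsig⟩ :
      root q ℓ x₁ = root q ℓ x₂ ∧ l1diff (sig q ℓ x₁) (sig q ℓ x₂) = d := by
    rw [tdDist] at h
    split_ifs at h with hroot
    · exact ⟨hroot, Nat.cast_inj.mp h⟩
    · exact absurd h.symm (ENat.natCast_ne_top d)
  obtain ⟨htake, htrunk⟩ := Prod.ext_iff.mp hroot
  obtain ⟨w, k₁, k₂, hw₁, hw₂, hk⟩ := exists_reachK_insertZeros_of_trunk_eq htrunk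
  obtain ⟨y₁, hy₁, hderiv₁⟩ := exists_reachK_tDup_of_reachK_insertZeros hx₁ hw₁
  obtain ⟨y₂, hy₂, hderiv₂⟩ := exists_reachK_tDup_of_reachK_insertZeros hx₂ hw₂
  have htake_y : y₁.take ℓ = y₂.take ℓ := by
    rw [← hy₁.eq_of_invariant (List.take ℓ) fun _ _ => TDup.take_eq,
      ← hy₂.eq_of_invariant (List.take ℓ) fun _ _ => TDup.take_eq]
    exact htake
  obtain rfl := eq_of_take_eq_of_derivV_eq hℓ htake_y (hderiv₁.trans hderiv₂.symm)
  exact ⟨y₁, k₁, k₂, hy₁, hy₂, hk.trans hsig⟩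

lemma sphere_inter_nonempty_iff_tdDist_le (hℓ : 1 ≤ ℓ) (hx₁ : ℓ ≤ x₁.length)
    (hlen : x₁.length = x₂.length) (t : ℕ) :
    (sphere (TDup ℓ) t x₁ ∩ sphere (TDup ℓ) t x₂).Nonempty ↔ tdDist q ℓ x₁ x₂ ≤ (2 * t : ℕ) := by
  constructor
  · rintro ⟨y, ⟨k₁, hk₁, hy₁⟩, ⟨k₂, hk₂, hy₂⟩⟩
    exact (tdDist_le_of_reachK hℓ hy₁ hy₂).trans (Nat.cast_le.mpr (by omega))
  · intro hdist
    obtain ⟨d, hd, hdt⟩ := ENat.le_natCast_iff.mp hdist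
    obtain ⟨y, k₁, k₂, hy₁, hy₂, hk⟩ := exists_reachK_of_tdDist_eq hℓ hx₁ (hlen ▸ hx₁) hd
    have hk₁₂ : k₁ = k₂ := by
      have hlen₁ := hy₁.length_eq fun _ _ => TDup.length_eq
      have hlen₂ := hy₂.length_eq fun _ _ => TDup.length_eq
      exact Nat.eq_of_mul_eq_mul_right hℓ (by omega)
    exact ⟨y, ⟨k₁, by omega, hy₁⟩, ⟨k₂, by omega, hy₂⟩⟩

end Derivative

/-- A code `C ⊆ Z_q^n` is `t`-tandem-duplication correcting (length `ℓ`) iff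
`d_{τ,ℓ}(c₁,c₂) ≥ 2t+1` for all distinct codewords. -/
theorem stmt1 (q ℓ t n : ℕ) (hq : 2 ≤ q) (hℓ : 1 ≤ ℓ) (ht : 1 ≤ t) (hn : ℓ ≤ n)
    (C : Set (List (ZMod q))) (hC : ∀ c ∈ C, c.length = n) :
    Correcting (TDup ℓ) t C ↔
      ∀ c₁ ∈ C, ∀ c₂ ∈ C, c₁ ≠ c₂ → ((2 * t + 1 : ℕ) : ℕ∞) ≤ tdDist q ℓ c₁ c₂ := by
  have hiff : ∀ c₁ ∈ C, ∀ c₂ ∈ C, ((sphere (TDup ℓ) t c₁ ∩ sphere (TDup ℓ) t c₂).Nonempty ↔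
      tdDist q ℓ c₁ c₂ < (2 * t + 1 : ℕ)) := by
    intro c₁ h₁ c₂ h₂
    have hlen := (hC c₁ h₁).trans (hC c₂ h₂).symm
    rw [sphere_inter_nonempty_iff_tdDist_le hℓ (hn.trans (hC c₁ h₁).ge) hlen, Nat.cast_add_one,
      ENat.lt_add_one_iff (ENat.natCast_ne_top _)]
  refine forall₂_congr fun c₁ h₁ => forall₂_congr fun c₂ h₂ => ?_
  rw [hiff c₁ h₁ c₂ h₂, ← not_imp_not, not_lt]

end DupPaper
end

section
/- The binary code C = {(0,1,0,1,0,1), (0,1,0,0,1,1)} ⊆ Z_2^6 is single palindromic-deletion correcting for deletions of length ℓ = 2 (the deletion spheres S_{π^δ,2}((010101)) = {(010101)} and S_{π^δ,2}((010011)) = {(010011), (0101)} are disjoint), but it is not single palindromic-duplication correcting for duplications of length ℓ = 2 (indeed (0,1,0,0,1,1,0,1) lies in both duplication spheres S_{π,2}((010101)) and S_{π,2}((010011))). In particular, a single palindromic-deletion correcting code need not be single palindromic-duplication correcting. -/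
/-!
A palindromic deletion of length `ℓ ≥ 1` removes half of a factor `v v^R`, and the two letters in
the middle of such a factor agree. The word `ababab` has no two equal neighbours, so nothing can be
deleted from it. Among the three factors of length `4` of `abaabb` only `baab` is a palindrome, so
its only deletion is `abab`. On the other hand, `a·ba·ab·bab` and `aba·ab·ba·b` are the same word,
hence a common duplication of `a·ba·bab` and `aba·ab·b`.
-/

namespace DupPaper

variable {α : Type*}

section Spheres

variable {rel : List α → List α → Prop} {t : ℕ} {x y : List α}

theorem sphere_one : sphere rel 1 x = insert x {y | rel x y} := by
  ext y
  constructor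
  · rintro ⟨k, hk, h⟩
    interval_cases k
    · exact Or.inl h.symm
    · obtain ⟨z, hz, rfl⟩ := h
      exact Or.inr hz
  · rintro (rfl | h)
    · exact ⟨0, zero_le_one, rfl⟩
    · exact ⟨1, le_rfl, y, h, rfl⟩

theorem correcting_iff_pairwiseDisjoint {C : Set (List α)} :
    Correcting rel t C ↔ C.PairwiseDisjoint (sphere rel t) :=
  forall₄_congr fun _ _ _ _ => by
    rw [← Set.not_disjoint_iff_nonempty_inter, not_imp_comm]

theorem correcting_pair (hxy : x ≠ y) :
    Correcting rel t {x, y} ↔ Disjoint (sphere rel t x) (sphere rel t y) := by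
  rw [correcting_iff_pairwiseDisjoint, Set.PairwiseDisjoint, Set.pairwise_pair_of_symm]
  exact imp_iff_right hxy

end Spheres

section PalindromicDeletion

variable {ℓ : ℕ} {x y : List α}

theorem palindrome_iff_exists_append_reverse {p : List α} (hp : p.length = 2 * ℓ) :
    p.Palindrome ↔ ∃ v : List α, v.length = ℓ ∧ p = v ++ v.reverse := by
  constructor
  · intro h
    have drop_eq : p.drop ℓ = (p.take ℓ).reverse := by
      rw [List.reverse_take, h.reverse_eq]
      congr 1
      lia
    refine ⟨p.take ℓ, by rw [List.length_take]; lia, ?_⟩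
    rw [← drop_eq, List.take_append_drop]
  · rintro ⟨v, -, rfl⟩
    exact List.Palindrome.append_reverse v

theorem pdelAt_append_reverse (u v w : List α) :
    pdelAt u.length v.length (u ++ v ++ v.reverse ++ w) = u ++ v ++ w := by
  have take_eq : (u ++ v ++ v.reverse ++ w).take (u.length + v.length) = u ++ v := by
    rw [List.append_assoc (u ++ v)]
    exact List.take_left' List.length_append
  have drop_eq : (u ++ v ++ v.reverse ++ w).drop (u.length + 2 * v.length) = w :=
    List.drop_left' (by simp only [List.length_append, List.length_reverse]; lia)
  rw [pdelAt, take_eq, drop_eq]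

theorem pDel_iff_exists_pdelAt :
    PDel ℓ x y ↔ ∃ i, i + 2 * ℓ ≤ x.length ∧ ((x.drop i).take (2 * ℓ)).Palindrome ∧
      y = pdelAt i ℓ x := by
  constructor
  · rintro ⟨u, v, w, rfl, rfl, rfl⟩
    have factor_eq : ((u ++ v ++ v.reverse ++ w).drop u.length).take (2 * v.length) =
        v ++ v.reverse := by
      simp [two_mul, List.take_append]
    refine ⟨u.length, ?_, ?_, (pdelAt_append_reverse u v w).symm⟩
    · simp only [List.length_append, List.length_reverse]
      lia
    · exact factor_eq ▸ List.Palindrome.append_reverse v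
  · rintro ⟨i, hi, hpal, rfl⟩
    have factor_length : ((x.drop i).take (2 * ℓ)).length = 2 * ℓ := by
      rw [List.length_take, List.length_drop]
      lia
    obtain ⟨v, rfl, hv⟩ := (palindrome_iff_exists_append_reverse factor_length).1 hpal
    obtain ⟨u, w, rfl, hx⟩ : ∃ u w, u.length = i ∧ x = u ++ v ++ v.reverse ++ w := by
      refine ⟨x.take i, (x.drop i).drop (2 * v.length), List.length_take_of_le (by lia), ?_⟩
      rw [List.append_assoc (x.take i), ← hv, List.append_assoc, List.take_append_drop,
        List.take_append_drop]
    exact ⟨u, v, w, rfl, hx, hx ▸ pdelAt_append_reverse u v w⟩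

theorem not_pDel_of_isChain_ne (hℓ : ℓ ≠ 0) (hx : x.IsChain (· ≠ ·)) : ¬ PDel ℓ x y := by
  rintro ⟨u, v, w, rfl, rfl, -⟩
  obtain rfl | ⟨v, c, rfl⟩ := List.eq_nil_or_concat' v
  · exact hℓ rfl
  · have infix_cc : [c, c] <:+: u ++ (v ++ [c]) ++ (v ++ [c]).reverse ++ w :=
      ⟨u ++ v, v.reverse ++ w, by simp⟩
    simpa using hx.infix infix_cc

theorem sphere_pDel_of_isChain_ne (hℓ : ℓ ≠ 0) (hx : x.IsChain (· ≠ ·)) :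
    sphere (PDel ℓ) 1 x = {x} := by
  simp [sphere_one, not_pDel_of_isChain_ne hℓ hx]

theorem pDel_two_abaabb_iff {a b : α} (hab : a ≠ b) :
    PDel 2 [a, b, a, a, b, b] y ↔ y = [a, b, a, b] := by
  rw [pDel_iff_exists_pdelAt]
  constructor
  · rintro ⟨i, hi, hpal, rfl⟩
    have hi' : i ≤ 2 := by simpa using hi
    interval_cases i
    · simp [List.Palindrome.iff_reverse_eq, hab, hab.symm] at hpal
    · rfl
    · simp [List.Palindrome.iff_reverse_eq, hab, hab.symm] at hpal
  · rintro rfl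
    exact ⟨1, by simp, List.Palindrome.of_reverse_eq rfl, rfl⟩

end PalindromicDeletion

theorem stmt3_general {a b : α} (hab : a ≠ b) :
    sphere (PDel 2) 1 [a, b, a, b, a, b] = {[a, b, a, b, a, b]} ∧
    sphere (PDel 2) 1 [a, b, a, a, b, b] = {[a, b, a, a, b, b], [a, b, a, b]} ∧
    Disjoint (sphere (PDel 2) 1 [a, b, a, b, a, b]) (sphere (PDel 2) 1 [a, b, a, a, b, b]) ∧
    Correcting (PDel 2) 1 {[a, b, a, b, a, b], [a, b, a, a, b, b]} ∧
    [a, b, a, a, b, b, a, b] ∈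
      sphere (PDup 2) 1 [a, b, a, b, a, b] ∩ sphere (PDup 2) 1 [a, b, a, a, b, b] ∧
    ¬ Correcting (PDup 2) 1 {[a, b, a, b, a, b], [a, b, a, a, b, b]} := by
  have hne : [a, b, a, b, a, b] ≠ [a, b, a, a, b, b] := by simp [hab]
  have sphere₁ : sphere (PDel 2) 1 [a, b, a, b, a, b] = {[a, b, a, b, a, b]} :=
    sphere_pDel_of_isChain_ne two_ne_zero (by simp [hab, hab.symm])
  have sphere₂ : sphere (PDel 2) 1 [a, b, a, a, b, b] = {[a, b, a, a, b, b], [a, b, a, b]} := by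
    simp only [sphere_one, pDel_two_abaabb_iff hab, Set.ofPred_eq_eq_singleton]
  have hdisj : Disjoint (sphere (PDel 2) 1 [a, b, a, b, a, b])
      (sphere (PDel 2) 1 [a, b, a, a, b, b]) := by
    simp [sphere₁, sphere₂, hab]
  have hdup : [a, b, a, a, b, b, a, b] ∈
      sphere (PDup 2) 1 [a, b, a, b, a, b] ∩ sphere (PDup 2) 1 [a, b, a, a, b, b] := by
    simp only [sphere_one]
    exact ⟨Or.inr ⟨[a], [b, a], [b, a, b], rfl, rfl, rfl⟩,
      Or.inr ⟨[a, b, a], [a, b], [b], rfl, rfl, rfl⟩⟩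
  refine ⟨sphere₁, sphere₂, hdisj, (correcting_pair hne).2 hdisj, hdup, ?_⟩
  rw [correcting_pair hne]
  exact Set.not_disjoint_iff_nonempty_inter.2 ⟨_, hdup⟩

/-- The code `C = {010101, 010011} ⊆ Z_2^6` is single palindromic-deletion correcting
(length 2) but not single palindromic-duplication correcting (length 2). -/
theorem stmt3 :
    sphere (PDel 2) 1 ([0,1,0,1,0,1] : List (ZMod 2)) = {[0,1,0,1,0,1]} ∧
    sphere (PDel 2) 1 ([0,1,0,0,1,1] : List (ZMod 2)) = {[0,1,0,0,1,1], [0,1,0,1]} ∧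
    Disjoint (sphere (PDel 2) 1 ([0,1,0,1,0,1] : List (ZMod 2)))
      (sphere (PDel 2) 1 ([0,1,0,0,1,1] : List (ZMod 2))) ∧
    Correcting (PDel 2) 1 ({[0,1,0,1,0,1], [0,1,0,0,1,1]} : Set (List (ZMod 2))) ∧
    ([0,1,0,0,1,1,0,1] : List (ZMod 2)) ∈
      sphere (PDup 2) 1 ([0,1,0,1,0,1] : List (ZMod 2)) ∩
        sphere (PDup 2) 1 ([0,1,0,0,1,1] : List (ZMod 2)) ∧
    ¬ Correcting (PDup 2) 1 ({[0,1,0,1,0,1], [0,1,0,0,1,1]} : Set (List (ZMod 2))) :=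
  stmt3_general zero_ne_one

end DupPaper
end
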